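/- arXiv:2112.02284 — 3 statements merged into one kernel-verified Lean document; each statement's English description precedes it below -/
import Mathlib

section
/- Let a ∈ (0,∞) and let X₁, X₂ be real random variables such that E[e^{−aX₁}] and E[e^{−aX₂}] are finite, so that h_a(X₁) and h_a(X₂) are finite. If X₁ − X₂ is not almost surely constant (i.e., ℙ(X₁ − X₂ = c) < 1 for every c ∈ ℝ), then for every α ∈ (0,1), h_a(αX₁ + (1−α)X₂) < α·h_a(X₁) + (1−α)·h_a(X₂). -/
/-!
With `Lᵢ = log E[e^{-aXᵢ}]`, the normalized exponents `uᵢ = -aXᵢ - Lᵢ` satisfy `E[e^{uᵢ}] = 1`.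
Strict convexity of `exp` gives `e^{αu₁ + (1-α)u₂} ≤ αe^{u₁} + (1-α)e^{u₂}` pointwise, strictly
wherever `u₁ ≠ u₂`, that is, wherever `X₁ - X₂ ≠ (L₂ - L₁)/a`. That set has positive probability,
so integrating gives `E[e^{αu₁ + (1-α)u₂}] < 1`; taking logarithms and dividing by `a` yields
the claim.
-/

open MeasureTheory Filter Set
open scoped ENNReal

noncomputable section

variable {Ω : Type*} [MeasurableSpace Ω]

/-- Entropic risk measure `h_a(X) = (1/a) log E[e^{-aX}]`. -/
def entropic (P : Measure Ω) (a : ℝ) (X : Ω → ℝ) : ℝ :=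
  (1 / a) * Real.log (∫ ω, Real.exp (-a * X ω) ∂P)

/-- Weighted entropic risk measure `h(X) = ∫_{[a₀,a₁]} h_a(X) m(da)`. -/
def werm (P : Measure Ω) (m : Measure ℝ) (a₀ a₁ : ℝ) (X : Ω → ℝ) : ℝ :=
  ∫ a in Set.Icc a₀ a₁, entropic P a X ∂m

/-- Marginal risk density transform `h′(X) = -∫_{[a₀,a₁]} e^{-aX}/E[e^{-aX}] m(da)`. -/
def hprime (P : Measure Ω) (m : Measure ℝ) (a₀ a₁ : ℝ) (X : Ω → ℝ) (ω : Ω) : ℝ :=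
  -∫ a in Set.Icc a₀ a₁, Real.exp (-a * X ω) / (∫ ω', Real.exp (-a * X ω') ∂P) ∂m

/-- Extended-real-valued expectation `E[f] = ∫ f⁺ - ∫ f⁻ ∈ [-∞,∞]`. -/
def eint (P : Measure Ω) (f : Ω → ℝ) : EReal :=
  ((∫⁻ ω, ENNReal.ofReal (f ω) ∂P : ℝ≥0∞) : EReal)
    - ((∫⁻ ω, ENNReal.ofReal (-(f ω)) ∂P : ℝ≥0∞) : EReal)

/-- `E[ρX] ∈ [0,∞]` for a nonnegative payoff. -/
def budget (P : Measure Ω) (ρ X : Ω → ℝ) : ℝ≥0∞ := ∫⁻ ω, ENNReal.ofReal (ρ ω * X ω) ∂P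

/-- `X ∈ L⁰₊`: a nonnegative random variable. -/
def Lpos (P : Measure Ω) (X : Ω → ℝ) : Prop := Measurable X ∧ ∀ᵐ ω ∂P, 0 ≤ X ω

/-- Objective of the Lagrangian risk-minimization problem: `h(X) + λ E[ρX]`. -/
def robj (P : Measure Ω) (m : Measure ℝ) (a₀ a₁ : ℝ) (ρ : Ω → ℝ) (lam : ℝ) (X : Ω → ℝ) : EReal :=
  ((werm P m a₀ a₁ X : ℝ) : EReal) + (lam : EReal) * ((budget P ρ X : ℝ≥0∞) : EReal)

/-- `ψ_X(y) = ∫_{[a₀,a₁]} e^{-ay} / E[e^{-aX}] m(da)`. -/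
def psi (P : Measure Ω) (m : Measure ℝ) (a₀ a₁ : ℝ) (X : Ω → ℝ) (y : ℝ) : ℝ :=
  ∫ a in Set.Icc a₀ a₁, Real.exp (-a * y) / (∫ ω, Real.exp (-a * X ω) ∂P) ∂m

/-- Inverse of `ψ_X` on `(0,∞)` (realized via `sSup`, since `ψ_X` is continuous, strictly
decreasing with limits `∞` at `-∞` and `0` at `∞`). -/
def psiInv (P : Measure Ω) (m : Measure ℝ) (a₀ a₁ : ℝ) (X : Ω → ℝ) (z : ℝ) : ℝ :=
  sSup {y : ℝ | z ≤ psi P m a₀ a₁ X y}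

/-- The transform `𝐓X = max(ψ_X⁻¹(λρ), 0)`. -/
def Ttrans (P : Measure Ω) (m : Measure ℝ) (a₀ a₁ lam : ℝ) (ρ : Ω → ℝ) (X : Ω → ℝ) : Ω → ℝ :=
  fun ω => max (psiInv P m a₀ a₁ X (lam * ρ ω)) 0

/-- `X ∈ 𝒳(x)`: nonnegative and `E[ρX] ≤ x`. -/
def feasible (P : Measure Ω) (ρ : Ω → ℝ) (x : ℝ) (X : Ω → ℝ) : Prop :=
  Lpos P X ∧ budget P ρ X ≤ ENNReal.ofReal x

/-- `γ₁(x)`: the minimal value of `h` over `𝒳(x)`. -/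
def gamma1 (P : Measure Ω) (m : Measure ℝ) (a₀ a₁ : ℝ) (ρ : Ω → ℝ) (x : ℝ) : ℝ :=
  sInf (werm P m a₀ a₁ '' {X | feasible P ρ x X})

/-- Expected utility `E[U(X)] ∈ [-∞,∞]`. -/
def eutil (P : Measure Ω) (U : ℝ → ℝ) (X : Ω → ℝ) : EReal := eint P (fun ω => U (X ω))

/-- Full Lagrangian objective `E[U(X)] - μ h(X) - λ E[ρX]`. -/
def fullObj (P : Measure Ω) (m : Measure ℝ) (a₀ a₁ : ℝ) (ρ : Ω → ℝ) (U : ℝ → ℝ)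
    (μ lam : ℝ) (X : Ω → ℝ) : EReal :=
  eutil P U X - ((μ * werm P m a₀ a₁ X : ℝ) : EReal)
    - (lam : EReal) * ((budget P ρ X : ℝ≥0∞) : EReal)

/-- Strict convexity of `exp` under the integral. Integrability of the mixture follows from
domination by the convex combination of the exponentials; equality of the integrals
would force the pointwise convexity gap of `exp` to vanish a.e., hence `u = v` a.e. -/
lemma integral_exp_convex_comb_lt {P : Measure Ω} {u v : Ω → ℝ} {α : ℝ}
    (hα : α ∈ Set.Ioo (0 : ℝ) 1) (hu : Measurable u) (hv : Measurable v)
    (hiu : Integrable (fun ω => Real.exp (u ω)) P)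
    (hiv : Integrable (fun ω => Real.exp (v ω)) P)
    (hne : ¬ u =ᵐ[P] v) :
    Integrable (fun ω => Real.exp (α * u ω + (1 - α) * v ω)) P ∧
    ∫ ω, Real.exp (α * u ω + (1 - α) * v ω) ∂P
      < α * ∫ ω, Real.exp (u ω) ∂P + (1 - α) * ∫ ω, Real.exp (v ω) ∂P := by
  obtain ⟨h0, h1⟩ := hα
  have hlt : ∀ x y : ℝ, x ≠ y →
      Real.exp (α * x + (1 - α) * y) < α * Real.exp x + (1 - α) * Real.exp y := fun x y hxy =>
    strictConvexOn_exp.2 (mem_univ x) (mem_univ y) hxy h0 (sub_pos.2 h1) (by ring)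
  have hle : ∀ x y : ℝ,
      Real.exp (α * x + (1 - α) * y) ≤ α * Real.exp x + (1 - α) * Real.exp y := fun x y =>
    convexOn_exp.2 (mem_univ x) (mem_univ y) h0.le (sub_pos.2 h1).le (by ring)
  have hR : Integrable (fun ω => α * Real.exp (u ω) + (1 - α) * Real.exp (v ω)) P :=
    (hiu.const_mul α).add (hiv.const_mul (1 - α))
  have hL : Integrable (fun ω => Real.exp (α * u ω + (1 - α) * v ω)) P := by
    refine hR.mono' (by fun_prop) (Eventually.of_forall fun ω => ?_)
    rw [Real.norm_eq_abs, Real.abs_exp]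
    exact hle _ _
  have hsum : ∫ ω, (α * Real.exp (u ω) + (1 - α) * Real.exp (v ω)) ∂P
      = α * ∫ ω, Real.exp (u ω) ∂P + (1 - α) * ∫ ω, Real.exp (v ω) ∂P := by
    rw [integral_add (hiu.const_mul α) (hiv.const_mul (1 - α)), integral_const_mul,
      integral_const_mul]
  refine ⟨hL, ?_⟩
  rw [← hsum]
  refine lt_of_le_of_ne (integral_mono hL hR fun ω => hle _ _) fun heq => hne ?_
  have hae := (integral_eq_iff_of_ae_le hL hR (Eventually.of_forall fun ω => hle _ _)).1 heq
  filter_upwards [hae] with ω hω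
  by_contra hx
  exact (hlt _ _ hx).ne hω

/-- strict convexity of the entropic risk measure `h_a` (`a ∈ (0,∞)`) for
random variables whose difference is not a.s. constant. -/
theorem entropic_strict_convex (P : Measure Ω) [IsProbabilityMeasure P]
    (a : ℝ) (ha : 0 < a) (X₁ X₂ : Ω → ℝ)
    (hmX₁ : Measurable X₁) (hmX₂ : Measurable X₂)
    (hint₁ : Integrable (fun ω => Real.exp (-a * X₁ ω)) P)
    (hint₂ : Integrable (fun ω => Real.exp (-a * X₂ ω)) P)
    (hnc : ∀ c : ℝ, P {ω | X₁ ω - X₂ ω = c} < 1) :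
    ∀ α ∈ Set.Ioo (0 : ℝ) 1,
      entropic P a (fun ω => α * X₁ ω + (1 - α) * X₂ ω)
        < α * entropic P a X₁ + (1 - α) * entropic P a X₂ := by
  intro α hα
  have hZ₁ := integral_exp_pos hint₁
  have hZ₂ := integral_exp_pos hint₂
  unfold entropic
  set Z₁ := ∫ ω, Real.exp (-a * X₁ ω) ∂P with hZ₁_def
  set Z₂ := ∫ ω, Real.exp (-a * X₂ ω) ∂P with hZ₂_def
  have hne : ¬ (fun ω => -a * X₁ ω - Real.log Z₁) =ᵐ[P] fun ω => -a * X₂ ω - Real.log Z₂ := by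
    intro h
    refine (hnc ((Real.log Z₂ - Real.log Z₁) / a)).ne ((prob_compl_eq_zero_iff ?_).1 ?_)
    · exact measurableSet_eq_fun (hmX₁.sub hmX₂) measurable_const
    · refine mem_ae_iff.1 ?_
      filter_upwards [h] with ω hω
      rw [eq_div_iff ha.ne']
      linarith
  have hexp₁ : (fun ω => Real.exp (-a * X₁ ω - Real.log Z₁))
      = fun ω => Real.exp (-a * X₁ ω) / Z₁ := by
    funext ω
    rw [Real.exp_sub, Real.exp_log hZ₁]
  have hexp₂ : (fun ω => Real.exp (-a * X₂ ω - Real.log Z₂))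
      = fun ω => Real.exp (-a * X₂ ω) / Z₂ := by
    funext ω
    rw [Real.exp_sub, Real.exp_log hZ₂]
  obtain ⟨hint, key⟩ := integral_exp_convex_comb_lt (P := P) hα
    (u := fun ω => -a * X₁ ω - Real.log Z₁) (v := fun ω => -a * X₂ ω - Real.log Z₂)
    (by fun_prop) (by fun_prop)
    (by rw [hexp₁]; exact hint₁.div_const _) (by rw [hexp₂]; exact hint₂.div_const _) hne
  set L := α * Real.log Z₁ + (1 - α) * Real.log Z₂ with hL_def
  have hcomb : (fun ω => Real.exp (α * (-a * X₁ ω - Real.log Z₁)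
        + (1 - α) * (-a * X₂ ω - Real.log Z₂)))
      = fun ω => Real.exp (-a * (α * X₁ ω + (1 - α) * X₂ ω)) / Real.exp L := by
    funext ω
    rw [← Real.exp_sub]
    congr 1
    rw [hL_def]
    ring
  rw [hexp₁, hexp₂, integral_div, integral_div, ← hZ₁_def, ← hZ₂_def, div_self hZ₁.ne',
    div_self hZ₂.ne', hcomb, integral_div, div_lt_iff₀ (Real.exp_pos L)] at key
  -- Positivity of the mixed expectation rules out the junk value `log 0 = 0`.
  have hZ : 0 < ∫ ω, Real.exp (-a * (α * X₁ ω + (1 - α) * X₂ ω)) ∂P := by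
    refine integral_exp_pos ?_
    rw [hcomb] at hint
    refine (hint.mul_const (Real.exp L)).congr (Eventually.of_forall fun ω => ?_)
    exact div_mul_cancel₀ _ (Real.exp_pos L).ne'
  have hlog : Real.log (∫ ω, Real.exp (-a * (α * X₁ ω + (1 - α) * X₂ ω)) ∂P) < L :=
    (Real.log_lt_iff_lt_exp hZ).2 (by linarith)
  calc _ < 1 / a * L := mul_lt_mul_of_pos_left hlog (by positivity)
    _ = _ := by rw [hL_def]; ring
end
end

section
/- Let {Xₙ, n ≥ 1} be a sequence of real random variables with Xₙ ≥ 0 a.s. for every n, converging in probability (in measure) to a real random variable X with X ≥ 0 a.s. Then lim_{n→∞} h(Xₙ) = h(X). -/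
/-!
Every subsequence of `Xn` has a further subsequence converging to `X` almost surely, so almost sure
convergence may be assumed (`tendsto_werm_of_ae`). Since `0 ≤ e^{-aX} ≤ 1` for `X ≥ 0`, dominated
convergence gives `E[e^{-aXₙ}] → E[e^{-aX}] > 0`, hence convergence of the entropic risk for each
fixed `a > 0`.

A second dominated convergence passes this through the integral over `a`. The domination comes from
monotonicity: for `a ∈ [a₀, a₁]` the number `E[e^{-aXₙ}]` lies between `E[e^{-a₁Xₙ}]` and `1`, so
`|h_a(Xₙ)| ≤ -(1/a₀) log E[e^{-a₁Xₙ}]`, and the right-hand side converges, so it is eventually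
bounded by a constant.
-/

open MeasureTheory Filter Set
open scoped ENNReal

noncomputable section

variable {Ω : Type*} [MeasurableSpace Ω]

lemma integrable_exp_neg_mul (P : Measure Ω) [IsProbabilityMeasure P] {a : ℝ} (ha : 0 ≤ a)
    {X : Ω → ℝ} (hX : Measurable X) (hX0 : ∀ᵐ ω ∂P, 0 ≤ X ω) :
    Integrable (fun ω => Real.exp (-a * X ω)) P := by
  refine Integrable.mono' (integrable_const (1 : ℝ))
    (by fun_prop : Measurable _).aestronglyMeasurable ?_
  filter_upwards [hX0] with ω hω
  rw [Real.norm_eq_abs, Real.abs_exp, Real.exp_le_one_iff]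
  nlinarith [mul_nonneg ha hω]

lemma integral_exp_neg_mul_pos (P : Measure Ω) [IsProbabilityMeasure P] {a : ℝ} (ha : 0 ≤ a)
    {X : Ω → ℝ} (hX : Measurable X) (hX0 : ∀ᵐ ω ∂P, 0 ≤ X ω) :
    0 < ∫ ω, Real.exp (-a * X ω) ∂P :=
  integral_exp_pos (integrable_exp_neg_mul P ha hX hX0)

lemma tendsto_integral_exp_neg_mul (P : Measure Ω) [IsProbabilityMeasure P] {a : ℝ} (ha : 0 ≤ a)
    {Xn : ℕ → Ω → ℝ} {X : Ω → ℝ} (hmXn : ∀ n, Measurable (Xn n))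
    (hXn0 : ∀ n, ∀ᵐ ω ∂P, 0 ≤ Xn n ω)
    (hconv : ∀ᵐ ω ∂P, Tendsto (fun n => Xn n ω) atTop (nhds (X ω))) :
    Tendsto (fun n => ∫ ω, Real.exp (-a * Xn n ω) ∂P) atTop
      (nhds (∫ ω, Real.exp (-a * X ω) ∂P)) := by
  refine tendsto_integral_of_dominated_convergence (fun _ => (1 : ℝ)) ?_ (integrable_const _) ?_ ?_
  · intro n
    have := hmXn n
    exact (by fun_prop : Measurable _).aestronglyMeasurable
  · intro n
    filter_upwards [hXn0 n] with ω hω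
    rw [Real.norm_eq_abs, Real.abs_exp, Real.exp_le_one_iff]
    nlinarith [mul_nonneg ha hω]
  · filter_upwards [hconv] with ω hω
    exact (Real.continuous_exp.tendsto _).comp (hω.const_mul (-a))

/-- The bound, uniform in `a ∈ [a₀, a₁]`, that dominates the integrand of the WERM. -/
lemma abs_entropic_le (P : Measure Ω) [IsProbabilityMeasure P] {a₀ a₁ a : ℝ} (ha₀ : 0 < a₀)
    (ha : a ∈ Set.Icc a₀ a₁) {X : Ω → ℝ} (hX : Measurable X) (hX0 : ∀ᵐ ω ∂P, 0 ≤ X ω) :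
    |entropic P a X| ≤ 1 / a₀ * -Real.log (∫ ω, Real.exp (-a₁ * X ω) ∂P) := by
  have hapos : 0 < a := ha₀.trans_le ha.1
  have ha₁pos : 0 < a₁ := hapos.trans_le ha.2
  have hint := integrable_exp_neg_mul P hapos.le hX hX0
  have hle_one : ∫ ω, Real.exp (-a * X ω) ∂P ≤ 1 := by
    have h : ∫ ω, Real.exp (-a * X ω) ∂P ≤ ∫ _, (1 : ℝ) ∂P := by
      refine integral_mono_ae hint (integrable_const _) ?_
      filter_upwards [hX0] with ω hω
      rw [Real.exp_le_one_iff]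
      nlinarith [mul_nonneg hapos.le hω]
    simpa using h
  have hmono : ∫ ω, Real.exp (-a₁ * X ω) ∂P ≤ ∫ ω, Real.exp (-a * X ω) ∂P := by
    refine integral_mono_ae (integrable_exp_neg_mul P ha₁pos.le hX hX0) hint ?_
    filter_upwards [hX0] with ω hω
    exact Real.exp_le_exp.2 (mul_le_mul_of_nonneg_right (neg_le_neg ha.2) hω)
  have hlog_nonpos := Real.log_nonpos (integral_exp_neg_mul_pos P hapos.le hX hX0).le hle_one
  have hlog := Real.log_le_log (integral_exp_neg_mul_pos P ha₁pos.le hX hX0) hmono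
  rw [entropic, abs_mul, abs_of_nonpos hlog_nonpos, abs_of_pos (by positivity)]
  exact mul_le_mul (one_div_le_one_div_of_le ha₀ ha.1) (neg_le_neg hlog)
    (neg_nonneg.2 hlog_nonpos) (by positivity)

lemma measurable_entropic (P : Measure Ω) [IsProbabilityMeasure P] {X : Ω → ℝ}
    (hX : Measurable X) : Measurable (fun a => entropic P a X) := by
  have h : StronglyMeasurable (fun p : ℝ × Ω => Real.exp (-p.1 * X p.2)) :=
    (by fun_prop : Measurable _).stronglyMeasurable
  exact (measurable_const.div measurable_id).mul
    (Real.measurable_log.comp h.integral_prod_right'.measurable)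

lemma tendsto_werm_of_ae (P : Measure Ω) [IsProbabilityMeasure P]
    {a₀ a₁ : ℝ} (ha₀ : 0 < a₀) (ha₀₁ : a₀ < a₁) (m : Measure ℝ) [IsProbabilityMeasure m]
    {Xn : ℕ → Ω → ℝ} {X : Ω → ℝ} (hmXn : ∀ n, Measurable (Xn n)) (hmX : Measurable X)
    (hXn0 : ∀ n, ∀ᵐ ω ∂P, 0 ≤ Xn n ω) (hX0 : ∀ᵐ ω ∂P, 0 ≤ X ω)
    (hconv : ∀ᵐ ω ∂P, Tendsto (fun n => Xn n ω) atTop (nhds (X ω))) :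
    Tendsto (fun n => werm P m a₀ a₁ (Xn n)) atTop (nhds (werm P m a₀ a₁ X)) := by
  have hlog : ∀ a, 0 < a → Tendsto (fun n => Real.log (∫ ω, Real.exp (-a * Xn n ω) ∂P)) atTop
      (nhds (Real.log (∫ ω, Real.exp (-a * X ω) ∂P))) := fun a ha =>
    (tendsto_integral_exp_neg_mul P ha.le hmXn hXn0 hconv).log
      (integral_exp_neg_mul_pos P ha.le hmX hX0).ne'
  have hbound := ((hlog a₁ (ha₀.trans ha₀₁)).neg.const_mul (1 / a₀)).eventually
    (eventually_le_nhds (lt_add_one _))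
  refine tendsto_integral_filter_of_dominated_convergence
    (fun _ => 1 / a₀ * -Real.log (∫ ω, Real.exp (-a₁ * X ω) ∂P) + 1) ?_ ?_
    (integrable_const _) ?_
  · exact Eventually.of_forall fun n => (measurable_entropic P (hmXn n)).aestronglyMeasurable
  · filter_upwards [hbound] with n hn
    filter_upwards [ae_restrict_mem measurableSet_Icc] with a ha
    exact (abs_entropic_le P ha₀ ha (hmXn n) (hXn0 n)).trans hn
  · filter_upwards [ae_restrict_mem measurableSet_Icc] with a ha
    exact (hlog a (ha₀.trans_le ha.1)).const_mul (1 / a)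

/-- continuity of the WERM with respect to convergence in probability of
nonnegative random variables: `h(Xₙ) → h(X)`. -/
theorem werm_continuous_in_probability (P : Measure Ω) [IsProbabilityMeasure P]
    (a₀ a₁ : ℝ) (ha₀ : 0 < a₀) (ha₀₁ : a₀ < a₁)
    (m : Measure ℝ) [IsProbabilityMeasure m] (hm : m (Set.Icc a₀ a₁) = 1)
    (Xn : ℕ → Ω → ℝ) (X : Ω → ℝ)
    (hmXn : ∀ n, Measurable (Xn n)) (hmX : Measurable X)
    (hXn0 : ∀ n, ∀ᵐ ω ∂P, 0 ≤ Xn n ω) (hX0 : ∀ᵐ ω ∂P, 0 ≤ X ω)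
    (hconv : TendstoInMeasure P Xn atTop X) :
    Tendsto (fun n => werm P m a₀ a₁ (Xn n)) atTop (nhds (werm P m a₀ a₁ X)) := by
  refine tendsto_of_subseq_tendsto fun ns hns => ?_
  obtain ⟨ms, -, hae⟩ := (hconv.comp hns).exists_seq_tendsto_ae
  exact ⟨ms, tendsto_werm_of_ae P ha₀ ha₀₁ m (fun n => hmXn _) hmX (fun n => hXn0 _) hX0 hae⟩
end
end

section
/- Let λ > 0 be such that the infimum of h(X) + λ·E[ρX] over X ∈ L⁰₊ is finite. Then X* ∈ L⁰₊ minimizes h(X) + λ·E[ρX] over X ∈ L⁰₊ if and only if h′(X*) + λρ ≥ 0 a.s. and h′(X*) + λρ = 0 a.s. on the event {X* > 0}. -/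
/-!
The functional `h` is convex with derivative `h′`, so the claim is the Karush-Kuhn-Tucker
condition over the cone `L⁰₊`.

Sufficiency rests on the tangent inequality `h(Y) ≥ h(X) + E[h′(X)(Y - X)]` (`werm_tangent`),
which is Jensen's inequality under each Esscher measure `e^{-aX}/E[e^{-aX}] dP`, integrated over
`a`. By the first-order conditions `-h′(X)Y ≤ λρY` and `-h′(X)X = λρX`, so the right-hand side is
at least `h(X) - λE[ρY] + λE[ρX]`; here `E[ρX] < ∞` because `x e^{-ax}` is bounded on `x ≥ 0`.

Necessity compares `X` with `X + t·1_B` for small real `t`. The bound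
`h(X + t·1_B) ≤ h(X) - t e^{-a₁t} E[-h′(X)1_B]` (`werm_shift_le`) turns optimality, as `t → 0`,
into `E[-h′(X)1_B] ≤ λE[ρ1_B]` for every event `B` (`t > 0`), with the reverse inequality if
`X` is bounded below by a positive constant on `B` (`t < 0`). Finiteness of `E[ρX]` comes from
comparison with the zero payoff.
-/

open MeasureTheory Filter Set
open scoped ENNReal

noncomputable section

variable {Ω : Type*} [MeasurableSpace Ω]

section Aux

variable {P : Measure Ω} [IsProbabilityMeasure P] {m : Measure ℝ} [IsProbabilityMeasure m]
  {a₀ a₁ : ℝ} {X Y ρ : Ω → ℝ}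

/-- The Laplace transform `G_X(a) = E[e^{-aX}]`. -/
def laplace (P : Measure Ω) (X : Ω → ℝ) (a : ℝ) : ℝ := ∫ ω, Real.exp (-a * X ω) ∂P

/-- The density `e^{-aX} / E[e^{-aX}]` of the Esscher measure with parameter `a`, as a function
of the pair `(ω, a)`. -/
def esscher (P : Measure Ω) (X : Ω → ℝ) (p : Ω × ℝ) : ℝ :=
  Real.exp (-p.2 * X p.1) / laplace P X p.2

lemma integrable_exp (hX : Lpos P X) {a : ℝ} (ha : 0 ≤ a) :
    Integrable (fun ω => Real.exp (-a * X ω)) P := by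
  have h1 := hX.1
  refine Integrable.of_bound (C := 1) (by fun_prop) ?_
  filter_upwards [hX.2] with ω hω
  rw [Real.norm_eq_abs, Real.abs_exp, Real.exp_le_one_iff]
  nlinarith [mul_nonneg ha hω]

lemma laplace_pos (hX : Lpos P X) {a : ℝ} (ha : 0 ≤ a) : 0 < laplace P X a :=
  integral_exp_pos (integrable_exp hX ha)

lemma laplace_anti (hX : Lpos P X) {a b : ℝ} (ha : 0 ≤ a) (hab : a ≤ b) :
    laplace P X b ≤ laplace P X a := by
  refine integral_mono_ae (integrable_exp hX (ha.trans hab)) (integrable_exp hX ha) ?_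
  filter_upwards [hX.2] with ω hω
  apply Real.exp_le_exp.2
  nlinarith [mul_le_mul_of_nonneg_right hab hω]

lemma laplace_le_one (hX : Lpos P X) {a : ℝ} (ha : 0 ≤ a) : laplace P X a ≤ 1 := by
  have := laplace_anti hX le_rfl ha
  simpa [laplace] using this

lemma measurable_laplace (hX : Measurable X) : Measurable (laplace P X) := by
  have h : Measurable (fun p : ℝ × Ω => Real.exp (-p.1 * X p.2)) := by fun_prop
  exact (h.stronglyMeasurable.integral_prod_right' (ν := P)).measurable

lemma measurable_esscher (hX : Measurable X) : Measurable (esscher P X) := by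
  have h := measurable_laplace (P := P) hX
  unfold esscher
  fun_prop

lemma ae_mem (m : Measure ℝ) (a₀ a₁ : ℝ) :
    ∀ᵐ a ∂(m.restrict (Icc a₀ a₁)), a ∈ Icc a₀ a₁ := ae_restrict_mem measurableSet_Icc

lemma ae_prod (hX : Lpos P X) :
    ∀ᵐ p ∂(P.prod (m.restrict (Icc a₀ a₁))), 0 ≤ X p.1 ∧ p.2 ∈ Icc a₀ a₁ := by
  filter_upwards [Measure.quasiMeasurePreserving_fst.ae hX.2,
    Measure.quasiMeasurePreserving_snd.ae (ae_mem m a₀ a₁)] with p h1 h2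
  exact ⟨h1, h2⟩

/-- On `[a₀, a₁]` the entropic risk lies between `(1/a₀) log G_X(a₁)` and `0`. -/
lemma integrable_entropic (ha₀ : 0 < a₀) (hX : Lpos P X) :
    Integrable (fun a => entropic P a X) (m.restrict (Icc a₀ a₁)) := by
  have hm : Measurable (fun a => entropic P a X) := by
    have h := measurable_laplace (P := P) hX.1
    change Measurable (fun a => (1 / a) * Real.log (laplace P X a))
    fun_prop
  refine Integrable.of_bound (C := (1 / a₀) * (-Real.log (laplace P X a₁)))
    hm.aestronglyMeasurable ?_
  filter_upwards [ae_mem m a₀ a₁] with a ha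
  have hpos : 0 < a := ha₀.trans_le ha.1
  have h0 : Real.log (laplace P X a) ≤ 0 :=
    Real.log_nonpos (laplace_pos hX hpos.le).le (laplace_le_one hX hpos.le)
  have h1 : Real.log (laplace P X a₁) ≤ Real.log (laplace P X a) :=
    Real.log_le_log (laplace_pos hX (hpos.le.trans ha.2)) (laplace_anti hX hpos.le ha.2)
  change ‖(1 / a) * Real.log (laplace P X a)‖ ≤ _
  rw [norm_mul, Real.norm_of_nonneg (by positivity), Real.norm_of_nonpos h0]
  have h2 : 1 / a ≤ 1 / a₀ := one_div_le_one_div_of_le ha₀ ha.1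
  have h3 : 0 ≤ 1 / a₀ := by positivity
  exact mul_le_mul h2 (by linarith) (by linarith) h3

lemma esscher_nonneg (ω : Ω) (a : ℝ) : 0 ≤ esscher P X (ω, a) :=
  div_nonneg (Real.exp_pos _).le (integral_nonneg fun _ => (Real.exp_pos _).le)

lemma integrable_esscher (ha₀ : 0 < a₀) (hX : Lpos P X) :
    Integrable (esscher P X) (P.prod (m.restrict (Icc a₀ a₁))) := by
  refine Integrable.of_bound (C := 1 / laplace P X a₁)
    (measurable_esscher hX.1).aestronglyMeasurable ?_
  filter_upwards [ae_prod hX] with p hp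
  have hpos : 0 < p.2 := ha₀.trans_le hp.2.1
  rw [Real.norm_of_nonneg (esscher_nonneg p.1 p.2)]
  refine div_le_div₀ zero_le_one ?_ (laplace_pos hX (hpos.le.trans hp.2.2))
    (laplace_anti hX hpos.le hp.2.2)
  rw [Real.exp_le_one_iff]
  nlinarith [mul_nonneg hpos.le hp.1]

/-- Since `x e^{-ax} ≤ 1/a`, the variable `X` is integrable under its own Esscher measures,
uniformly in `a ∈ [a₀, a₁]`, whether or not it is integrable under `P`. -/
lemma integrable_esscher_mul_self (ha₀ : 0 < a₀) (hX : Lpos P X) :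
    Integrable (fun p : Ω × ℝ => esscher P X p * X p.1)
      (P.prod (m.restrict (Icc a₀ a₁))) := by
  have hm := hX.1
  have hm' := measurable_esscher (P := P) hX.1
  refine Integrable.of_bound (C := (1 / a₀) / laplace P X a₁)
    (by fun_prop) ?_
  filter_upwards [ae_prod hX] with p hp
  have hpos : 0 < p.2 := ha₀.trans_le hp.2.1
  rw [Real.norm_of_nonneg (mul_nonneg (esscher_nonneg p.1 p.2) hp.1), esscher, div_mul_eq_mul_div]
  refine div_le_div₀ (by positivity) ?_ (laplace_pos hX (hpos.le.trans hp.2.2))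
    (laplace_anti hX hpos.le hp.2.2)
  rw [neg_mul, Real.exp_neg, inv_mul_eq_div, div_le_div_iff₀ (Real.exp_pos _) ha₀]
  nlinarith [Real.add_one_le_exp (p.2 * X p.1), mul_le_mul_of_nonneg_right hp.2.1 hp.1]

lemma neg_hprime_eq (ω : Ω) :
    -hprime P m a₀ a₁ X ω = ∫ a in Icc a₀ a₁, esscher P X (ω, a) ∂m := by
  simp [hprime, esscher, laplace]

lemma neg_hprime_nonneg (ω : Ω) : 0 ≤ -hprime P m a₀ a₁ X ω := by
  rw [neg_hprime_eq]
  exact integral_nonneg fun a => esscher_nonneg ω a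

lemma integrable_hprime (ha₀ : 0 < a₀) (hX : Lpos P X) :
    Integrable (hprime P m a₀ a₁ X) P := by
  have h := (integrable_esscher (m := m) (a₁ := a₁) ha₀ hX).integral_prod_left.neg
  refine h.congr (Eventually.of_forall fun ω => ?_)
  rw [Pi.neg_apply, ← neg_hprime_eq, neg_neg]

/-- Upper bound for the change of `h` under a shift by the constant `t`, of either sign, on the
event `B`. It follows from `log x ≤ x - 1` and `(e^{-at} - 1)/a ≤ -t e^{-at} ≤ -t e^{-a₁t}`. -/
lemma werm_shift_le (ha₀ : 0 < a₀) (hX : Lpos P X) {B : Set Ω} (hB : MeasurableSet B)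
    (t : ℝ) (hY : Lpos P (fun ω => X ω + B.indicator (fun _ => t) ω)) :
    werm P m a₀ a₁ (fun ω => X ω + B.indicator (fun _ => t) ω) ≤
      werm P m a₀ a₁ X - t * Real.exp (-a₁ * t) * ∫ ω in B, -hprime P m a₀ a₁ X ω ∂P := by
  have hW : Integrable (esscher P X) ((P.restrict B).prod (m.restrict (Icc a₀ a₁))) :=
    (integrable_esscher ha₀ hX).mono_measure (Measure.prod_mono Measure.restrict_le_self le_rfl)
  have hfub : ∫ ω in B, -hprime P m a₀ a₁ X ω ∂P
      = ∫ a in Icc a₀ a₁, (∫ ω in B, esscher P X (ω, a) ∂P) ∂m := by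
    simp_rw [neg_hprime_eq]
    exact integral_integral_swap (f := fun ω a => esscher P X (ω, a)) hW
  rw [hfub, werm, werm, ← integral_const_mul,
    ← integral_sub (integrable_entropic ha₀ hX) (hW.integral_prod_right.const_mul _)]
  refine integral_mono_ae (integrable_entropic ha₀ hY)
    ((integrable_entropic ha₀ hX).sub (hW.integral_prod_right.const_mul _)) ?_
  filter_upwards [ae_mem m a₀ a₁] with a ha
  have hpos : 0 < a := ha₀.trans_le ha.1
  set Y := fun ω => X ω + B.indicator (fun _ => t) ω with hYdef
  have hGX := laplace_pos hX hpos.le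
  have hGY := laplace_pos hY hpos.le
  have hdiff : laplace P Y a - laplace P X a
      = (Real.exp (-a * t) - 1) * ∫ ω in B, Real.exp (-a * X ω) ∂P := by
    rw [laplace, laplace, ← integral_sub (integrable_exp hY hpos.le) (integrable_exp hX hpos.le),
      ← integral_indicator hB, ← integral_const_mul]
    congr 1
    funext ω
    by_cases h : ω ∈ B
    · simp only [hYdef, indicator_of_mem h]
      rw [mul_add, Real.exp_add]
      ring
    · simp [hYdef, indicator_of_notMem h]
  have hq : ∫ ω in B, esscher P X (ω, a) ∂P
      = (∫ ω in B, Real.exp (-a * X ω) ∂P) / laplace P X a := by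
    simp only [esscher]
    exact integral_div _ _
  have hq0 : 0 ≤ ∫ ω in B, esscher P X (ω, a) ∂P := integral_nonneg fun ω => esscher_nonneg ω a
  have hlog : Real.log (laplace P Y a) - Real.log (laplace P X a)
      ≤ (Real.exp (-a * t) - 1) * ∫ ω in B, esscher P X (ω, a) ∂P := by
    rw [← Real.log_div hGY.ne' hGX.ne', hq, ← mul_div_assoc, ← hdiff, sub_div, div_self hGX.ne']
    exact Real.log_le_sub_one_of_pos (div_pos hGY hGX)
  have hscal : Real.exp (-a * t) - 1 ≤ a * (-t * Real.exp (-a₁ * t)) := by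
    have e1 : Real.exp (-a * t) - 1 ≤ a * (-t * Real.exp (-a * t)) := by
      have h := Real.add_one_le_exp (a * t)
      have h2 : Real.exp (-a * t) * Real.exp (a * t) = 1 := by
        rw [← Real.exp_add]; simp
      nlinarith [mul_le_mul_of_nonneg_left h (Real.exp_pos (-a * t)).le]
    have e2 : -t * Real.exp (-a * t) ≤ -t * Real.exp (-a₁ * t) := by
      rcases le_total 0 t with h | h
      · have : Real.exp (-a₁ * t) ≤ Real.exp (-a * t) :=
          Real.exp_le_exp.2 (by nlinarith [mul_le_mul_of_nonneg_right ha.2 h])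
        nlinarith
      · have : Real.exp (-a * t) ≤ Real.exp (-a₁ * t) :=
          Real.exp_le_exp.2 (by nlinarith [mul_le_mul_of_nonpos_right ha.2 h])
        nlinarith
    exact e1.trans (mul_le_mul_of_nonneg_left e2 hpos.le)
  have hfin := hlog.trans (mul_le_mul_of_nonneg_right hscal hq0)
  change (1 / a) * Real.log (laplace P Y a) ≤ (1 / a) * Real.log (laplace P X a)
    - t * Real.exp (-a₁ * t) * ∫ ω in B, esscher P X (ω, a) ∂P
  rw [← sub_nonneg]
  have : (1 / a) * Real.log (laplace P X a)
      - t * Real.exp (-a₁ * t) * (∫ ω in B, esscher P X (ω, a) ∂P)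
      - (1 / a) * Real.log (laplace P Y a)
      = (1 / a) * (a * (-t * Real.exp (-a₁ * t)) * (∫ ω in B, esscher P X (ω, a) ∂P)
        - (Real.log (laplace P Y a) - Real.log (laplace P X a))) := by
    field_simp
    ring
  rw [this]
  exact mul_nonneg (by positivity) (by linarith)

/-- Jensen's inequality under the Esscher measure with parameter `a`: the tangent inequality
for `Y ↦ (1/a) log E[e^{-aY}]` at `X`. -/
lemma entropic_tangent (hX : Lpos P X) (hY : Lpos P Y) {a : ℝ} (ha : 0 < a)
    (hi : Integrable (fun ω => esscher P X (ω, a) * (Y ω - X ω)) P) :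
    entropic P a X - ∫ ω, esscher P X (ω, a) * (Y ω - X ω) ∂P ≤ entropic P a Y := by
  set c := ∫ ω, esscher P X (ω, a) * (Y ω - X ω) ∂P with hc
  have hGX := laplace_pos hX ha.le
  have hGY := laplace_pos hY ha.le
  have hq : Integrable (fun ω => esscher P X (ω, a)) P :=
    (integrable_exp hX ha.le).div_const (laplace P X a)
  have hq1 : ∫ ω, esscher P X (ω, a) ∂P = 1 := by
    simp only [esscher]
    rw [integral_div]
    exact div_self hGX.ne'
  have hmain : Real.exp (-a * c) ≤ laplace P Y a / laplace P X a := by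
    have h1 : Integrable (fun ω => Real.exp (-a * c) * ((1 + a * c) * esscher P X (ω, a)
        - a * (esscher P X (ω, a) * (Y ω - X ω)))) P :=
      ((hq.const_mul _).sub (hi.const_mul _)).const_mul _
    have h2 : ∫ ω, Real.exp (-a * c) * ((1 + a * c) * esscher P X (ω, a)
        - a * (esscher P X (ω, a) * (Y ω - X ω))) ∂P = Real.exp (-a * c) := by
      rw [integral_const_mul, integral_sub (hq.const_mul _) (hi.const_mul _), integral_const_mul,
        integral_const_mul, hq1, ← hc]
      ring
    rw [← h2, laplace, ← integral_div]
    refine integral_mono h1 ((integrable_exp hY ha.le).div_const _) fun ω => ?_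
    simp only [esscher]
    have h3 := Real.add_one_le_exp (-a * (Y ω - X ω) + a * c)
    have h4 : Real.exp (-a * Y ω)
        = Real.exp (-a * c) * Real.exp (-a * X ω) * Real.exp (-a * (Y ω - X ω) + a * c) := by
      rw [← Real.exp_add, ← Real.exp_add]
      ring_nf
    rw [h4]
    calc _ = Real.exp (-a * c) * Real.exp (-a * X ω) * (-a * (Y ω - X ω) + a * c + 1)
          / laplace P X a := by ring
      _ ≤ _ := by gcongr
  have hlog := Real.log_le_log (Real.exp_pos _) hmain
  rw [Real.log_exp, Real.log_div hGY.ne' hGX.ne'] at hlog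
  change (1 / a) * Real.log (laplace P X a) - c ≤ (1 / a) * Real.log (laplace P Y a)
  have h5 := mul_le_mul_of_nonneg_left hlog (by positivity : 0 ≤ 1 / a)
  have h6 : (1 / a) * (-a * c) = -c := by field_simp
  rw [h6] at h5
  linarith

/-- The tangent inequality `h(Y) ≥ h(X) + E[h′(X)(Y - X)]` when `h′(X)Y` is integrable, together
with the integrability of `h′(X)X`, which always holds. -/
lemma werm_tangent (ha₀ : 0 < a₀) (hX : Lpos P X) (hY : Lpos P Y)
    (hi : Integrable (fun ω => -hprime P m a₀ a₁ X ω * Y ω) P) :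
    Integrable (fun ω => -hprime P m a₀ a₁ X ω * X ω) P ∧
    werm P m a₀ a₁ X - ((∫ ω, -hprime P m a₀ a₁ X ω * Y ω ∂P)
      - ∫ ω, -hprime P m a₀ a₁ X ω * X ω ∂P) ≤ werm P m a₀ a₁ Y := by
  have hmY := hY.1
  have hmW := measurable_esscher (P := P) hX.1
  have hWX := integrable_esscher_mul_self (m := m) (a₁ := a₁) ha₀ hX
  -- Fubini applies to `Y` because the iterated integral of the nonnegative integrand is finite.
  have hWY : Integrable (fun p : Ω × ℝ => esscher P X p * Y p.1)
      (P.prod (m.restrict (Icc a₀ a₁))) := by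
    rw [integrable_prod_iff (by fun_prop)]
    constructor
    · filter_upwards [(integrable_esscher (m := m) (a₁ := a₁) ha₀ hX).prod_right_ae] with ω hω
      exact hω.mul_const _
    · refine hi.congr ?_
      filter_upwards [hY.2] with ω hω
      rw [neg_hprime_eq, ← integral_mul_const]
      congr 1
      funext a
      exact (Real.norm_of_nonneg (mul_nonneg (esscher_nonneg ω a) hω)).symm
  have hZX : Integrable (fun ω => -hprime P m a₀ a₁ X ω * X ω) P := by
    refine hWX.integral_prod_left.congr (Eventually.of_forall fun ω => ?_)
    simp only [neg_hprime_eq, integral_mul_const]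
  refine ⟨hZX, ?_⟩
  have hD : Integrable (fun p : Ω × ℝ => esscher P X p * (Y p.1 - X p.1))
      (P.prod (m.restrict (Icc a₀ a₁))) := by
    refine (hWY.sub hWX).congr (Eventually.of_forall fun p => ?_)
    simp [mul_sub]
  have hfub : (∫ ω, -hprime P m a₀ a₁ X ω * Y ω ∂P) - ∫ ω, -hprime P m a₀ a₁ X ω * X ω ∂P
      = ∫ a in Icc a₀ a₁, (∫ ω, esscher P X (ω, a) * (Y ω - X ω) ∂P) ∂m := by
    rw [← integral_sub hi hZX,
      ← integral_integral_swap (f := fun ω a => esscher P X (ω, a) * (Y ω - X ω)) hD]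
    congr 1
    funext ω
    rw [integral_mul_const, ← neg_hprime_eq]
    ring
  rw [hfub, werm, werm, ← integral_sub (integrable_entropic ha₀ hX) hD.integral_prod_right]
  refine integral_mono_ae ((integrable_entropic ha₀ hX).sub hD.integral_prod_right)
    (integrable_entropic ha₀ hY) ?_
  filter_upwards [ae_mem m a₀ a₁, hD.prod_left_ae] with a ha hDa
  exact entropic_tangent hX hY (ha₀.trans_le ha.1) hDa

lemma robj_eq {lam : ℝ} (hρ0 : ∀ᵐ ω ∂P, 0 < ρ ω) (hY : Lpos P Y)
    (hi : Integrable (fun ω => ρ ω * Y ω) P) :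
    robj P m a₀ a₁ ρ lam Y = ((werm P m a₀ a₁ Y + lam * ∫ ω, ρ ω * Y ω ∂P : ℝ) : EReal) := by
  have h0 : 0 ≤ᵐ[P] fun ω => ρ ω * Y ω := by
    filter_upwards [hρ0, hY.2] with ω h1 h2
    exact mul_nonneg h1.le h2
  rw [robj, budget, ← ofReal_integral_eq_lintegral_ofReal hi h0, EReal.coe_ennreal_ofReal,
    max_eq_left (integral_nonneg_of_ae h0)]
  norm_cast

lemma integrable_of_robj_ne_top {lam : ℝ} (hlam : 0 < lam) (hmρ : Measurable ρ)
    (hρ0 : ∀ᵐ ω ∂P, 0 < ρ ω) (hY : Lpos P Y)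
    (h : robj P m a₀ a₁ ρ lam Y ≠ ⊤) : Integrable (fun ω => ρ ω * Y ω) P := by
  have hmY := hY.1
  have h0 : 0 ≤ᵐ[P] fun ω => ρ ω * Y ω := by
    filter_upwards [hρ0, hY.2] with ω h1 h2
    exact mul_nonneg h1.le h2
  refine ⟨by fun_prop, ?_⟩
  rw [hasFiniteIntegral_iff_ofReal h0, lt_top_iff_ne_top]
  intro htop
  apply h
  rw [robj, budget, htop, EReal.coe_ennreal_top, EReal.coe_mul_top_of_pos hlam,
    EReal.coe_add_top]

/-- Optimality of `X` against the shifts `X + sε·1_B` with small `ε > 0`, in the limit `ε → 0`.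
The direction `s` is `1` or `-1` in the applications. -/
lemma shift_limit {lam s η : ℝ} (hη : 0 < η) (ha₀ : 0 < a₀) (hρ0 : ∀ᵐ ω ∂P, 0 < ρ ω)
    (hρint : Integrable ρ P) (hX : Lpos P X) (hρX : Integrable (fun ω => ρ ω * X ω) P)
    (hopt : ∀ Y, Lpos P Y → robj P m a₀ a₁ ρ lam X ≤ robj P m a₀ a₁ ρ lam Y)
    {B : Set Ω} (hB : MeasurableSet B)
    (hpos : ∀ ε, 0 < ε → ε < η → ∀ᵐ ω ∂P, 0 ≤ X ω + B.indicator (fun _ => s * ε) ω) :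
    s * ∫ ω in B, -hprime P m a₀ a₁ X ω ∂P ≤ s * ∫ ω in B, lam * ρ ω ∂P := by
  have key : ∀ ε, 0 < ε → ε < η → s * Real.exp (-a₁ * (s * ε)) *
      (∫ ω in B, -hprime P m a₀ a₁ X ω ∂P) ≤ s * ∫ ω in B, lam * ρ ω ∂P := by
    intro ε h0 h1
    have hY : Lpos P (fun ω => X ω + B.indicator (fun _ => s * ε) ω) :=
      ⟨hX.1.add (measurable_const.indicator hB), hpos ε h0 h1⟩
    have heq : (fun ω => ρ ω * (X ω + B.indicator (fun _ => s * ε) ω))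
        = fun ω => ρ ω * X ω + B.indicator (fun ω => (s * ε) * ρ ω) ω := by
      funext ω
      by_cases h : ω ∈ B
      · simp only [indicator_of_mem h]; ring
      · simp only [indicator_of_notMem h]; ring
    have hind : Integrable (B.indicator (fun ω => (s * ε) * ρ ω)) P :=
      (hρint.const_mul _).indicator hB
    have hi : Integrable (fun ω => ρ ω * (X ω + B.indicator (fun _ => s * ε) ω)) P := by
      rw [heq]
      exact hρX.add hind
    have h2 := hopt _ hY
    rw [robj_eq hρ0 hX hρX, robj_eq hρ0 hY hi, EReal.coe_le_coe_iff, heq,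
      integral_add hρX hind, integral_indicator hB, integral_const_mul] at h2
    have h3 := werm_shift_le (m := m) (a₁ := a₁) ha₀ hX hB (s * ε) hY
    rw [integral_const_mul]
    have h4 : ε * (s * Real.exp (-a₁ * (s * ε)) * ∫ ω in B, -hprime P m a₀ a₁ X ω ∂P)
        ≤ ε * (s * (lam * ∫ ω in B, ρ ω ∂P)) := by linarith
    exact le_of_mul_le_mul_left h4 h0
  have hcont : Continuous (fun ε : ℝ => s * Real.exp (-a₁ * (s * ε)) *
      (∫ ω in B, -hprime P m a₀ a₁ X ω ∂P)) := by fun_prop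
  have hlim := (hcont.tendsto 0).mono_left (nhdsWithin_le_nhds (s := Ioi 0))
  simp only [mul_zero, Real.exp_zero, mul_one] at hlim
  refine le_of_tendsto hlim ?_
  filter_upwards [Ioo_mem_nhdsGT hη] with ε hε
  exact key ε hε.1 hε.2

end Aux

/-- first-order characterization of the minimizer of `h(X) + λ E[ρX]` over
`L⁰₊` (assuming the infimum is finite, i.e. `> -∞`): `X*` is a minimizer iff
`h′(X*) + λρ ≥ 0` a.s. and `h′(X*) + λρ = 0` a.s. on `{X* > 0}`. -/
theorem risk_minimization_foc (P : Measure Ω) [IsProbabilityMeasure P]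
    (a₀ a₁ : ℝ) (ha₀ : 0 < a₀) (ha₀₁ : a₀ < a₁)
    (m : Measure ℝ) [IsProbabilityMeasure m] (hm : m (Set.Icc a₀ a₁) = 1)
    (ρ : Ω → ℝ) (hmρ : Measurable ρ) (hρ0 : ∀ᵐ ω ∂P, 0 < ρ ω) (hρint : Integrable ρ P)
    (lam : ℝ) (hlam : 0 < lam)
    (hfin : sInf (robj P m a₀ a₁ ρ lam '' {X | Lpos P X}) ≠ (⊥ : EReal))
    (X : Ω → ℝ) (hX : Lpos P X) :
    (∀ Y, Lpos P Y → robj P m a₀ a₁ ρ lam X ≤ robj P m a₀ a₁ ρ lam Y) ↔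
      ((∀ᵐ ω ∂P, 0 ≤ hprime P m a₀ a₁ X ω + lam * ρ ω) ∧
        (∀ᵐ ω ∂P, 0 < X ω → hprime P m a₀ a₁ X ω + lam * ρ ω = 0)) := by
  constructor
  · intro hopt
    have hzero : Lpos P (fun _ : Ω => (0 : ℝ)) := ⟨measurable_const, by simp⟩
    have hρX : Integrable (fun ω => ρ ω * X ω) P := by
      refine integrable_of_robj_ne_top (m := m) (a₀ := a₀) (a₁ := a₁) hlam hmρ hρ0 hX ?_
      refine ne_top_of_le_ne_top ?_ (hopt _ hzero)
      rw [robj_eq hρ0 hzero (by simp)]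
      exact EReal.coe_ne_top _
    have hZ : Integrable (fun ω => -hprime P m a₀ a₁ X ω) P := (integrable_hprime ha₀ hX).neg
    have hlρ : Integrable (fun ω => lam * ρ ω) P := hρint.const_mul _
    have hle : (fun ω => -hprime P m a₀ a₁ X ω) ≤ᵐ[P] fun ω => lam * ρ ω := by
      refine ae_le_of_forall_setIntegral_le hZ hlρ fun B hB _ => ?_
      have h := shift_limit (s := 1) (η := 1) one_pos ha₀ hρ0 hρint hX hρX hopt hB ?_
      · simpa using h
      · intro ε h0 _
        filter_upwards [hX.2] with ω hω
        exact add_nonneg hω (indicator_nonneg (fun _ _ => by linarith) _)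
    have hge : ∀ n : ℕ, ∀ᵐ ω ∂P, 1 / ((n : ℝ) + 1) < X ω →
        lam * ρ ω ≤ -hprime P m a₀ a₁ X ω := by
      intro n
      set A : Set Ω := {ω | 1 / ((n : ℝ) + 1) < X ω} with hA
      have hAm : MeasurableSet A := measurableSet_lt measurable_const hX.1
      have h : (fun ω => lam * ρ ω) ≤ᵐ[P.restrict A] fun ω => -hprime P m a₀ a₁ X ω := by
        refine ae_le_of_forall_setIntegral_le hlρ.restrict hZ.restrict fun B hB _ => ?_
        rw [Measure.restrict_restrict hB]
        have h := shift_limit (s := -1) (η := 1 / ((n : ℝ) + 1)) (by positivity) ha₀ hρ0 hρint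
          hX hρX hopt (hB.inter hAm) ?_
        · linarith
        · intro ε h0 h1
          filter_upwards [hX.2] with ω hω
          by_cases hm' : ω ∈ B ∩ A
          · rw [indicator_of_mem hm']
            have : 1 / ((n : ℝ) + 1) < X ω := hm'.2
            linarith
          · rw [indicator_of_notMem hm']
            linarith
      exact (ae_restrict_iff' hAm).1 h
    refine ⟨?_, ?_⟩
    · filter_upwards [hle] with ω hω
      linarith
    · filter_upwards [hle, ae_all_iff.2 hge] with ω h1 h2 h3
      obtain ⟨n, hn⟩ := exists_nat_one_div_lt h3
      linarith [h2 n hn]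
  · rintro ⟨h1, h2⟩ Y hY
    by_cases htop : robj P m a₀ a₁ ρ lam Y = ⊤
    · rw [htop]
      exact le_top
    have hρY := integrable_of_robj_ne_top hlam hmρ hρ0 hY htop
    have hmY := hY.1
    have hZY : Integrable (fun ω => -hprime P m a₀ a₁ X ω * Y ω) P := by
      refine (hρY.const_mul lam).mono'
        ((integrable_hprime ha₀ hX).neg.aestronglyMeasurable.mul hmY.aestronglyMeasurable) ?_
      filter_upwards [h1, hY.2] with ω h hω
      rw [Real.norm_of_nonneg (mul_nonneg (neg_hprime_nonneg ω) hω)]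
      nlinarith
    obtain ⟨hZX, htan⟩ := werm_tangent ha₀ hX hY hZY
    have hslack : (fun ω => -hprime P m a₀ a₁ X ω * X ω) =ᵐ[P] fun ω => lam * (ρ ω * X ω) := by
      filter_upwards [h2, hX.2] with ω h hω
      rcases hω.eq_or_lt with h0 | h0
      · simp [← h0]
      · have : -hprime P m a₀ a₁ X ω = lam * ρ ω := by linarith [h h0]
        rw [this, mul_assoc]
    have hρX : Integrable (fun ω => ρ ω * X ω) P :=
      (integrable_const_mul_iff hlam.ne'.isUnit _).1 (hZX.congr hslack)
    have hYle : ∫ ω, -hprime P m a₀ a₁ X ω * Y ω ∂P ≤ lam * ∫ ω, ρ ω * Y ω ∂P := by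
      rw [← integral_const_mul]
      refine integral_mono_ae hZY (hρY.const_mul lam) ?_
      filter_upwards [h1, hY.2] with ω h hω
      nlinarith
    rw [integral_congr_ae hslack, integral_const_mul] at htan
    rw [robj_eq hρ0 hX hρX, robj_eq hρ0 hY hρY, EReal.coe_le_coe_iff]
    linarith
end
end
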